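/- There exists an absolute constant C > 0 such that the following holds. Let K ≥ 1, L ≥ 2, n ≥ 1 and X ≥ 2 be integers. Let f : ℚ \ {0} → ℤ_{≥0} and g : Q_{≤K} → ℤ_{≥0} be finitely supported functions with all values of f and g at most X. Suppose B ⊆ Q_{≤L} satisfies |B ∩ Q_{=ℓ}| ≤ n for every 1 ≤ ℓ ≤ L, and let ω : ℕ → ℝ_{≥0} be sub-multiplicative. Then Σ' over reduced fractions a/k, b/ℓ, c/q with a/k − b/ℓ = c/q and b/ℓ ∈ B of ω(k)·g(a/k)·f(c/q) is at most C · (log X) · ( L·n·(log L)·M_log(ω·τ₃; L) )^{1/2} · ( Σ'_{c/q} ω(q)·τ₃(q)²·f(c/q)² )^{1/2} · ( Σ'_{a/k} ω(k)·g(a/k)² )^{1/2}, where Σ' means all fractions are written in lowest terms. -/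

import Mathlib

/-- The set of reduced rationals `a/q ∈ [0,1]` with `1 ≤ a ≤ q` and `gcd(a,q) = 1`. -/
def Qeq (q : ℕ) : Finset ℚ :=
  ((Finset.Icc 1 q).filter fun a => Nat.gcd a q = 1).image fun a : ℕ => (a : ℚ) / (q : ℚ)

/-- The set of rationals in `[0,1]` with denominator at most `Q`. -/
def Qle (Q : ℕ) : Finset ℚ := (Finset.Icc 1 Q).biUnion Qeq

/-- The ternary divisor function `τ₃(n) = #{(a,b,c) ∈ ℕ³ : abc = n}`. -/
def tau3 (n : ℕ) : ℕ :=
  ((Finset.Icc 1 n ×ˢ Finset.Icc 1 n ×ˢ Finset.Icc 1 n).filter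
    fun p => p.1 * p.2.1 * p.2.2 = n).card

/-- The logarithmic maximal average `M_log(ω; X) = max_{2 ≤ x ≤ X} (1/log x) ∑_{n ≤ x} ω(n)/n`. -/
noncomputable def MlogAvg (w : ℕ → ℝ) (X : ℕ) : ℝ :=
  ⨆ x ∈ Finset.Icc 2 X, (∑ n ∈ Finset.Icc 1 x, w n / (n : ℝ)) / Real.log x

/-- `ω` is sub-multiplicative: `ω(ab) ≤ ω(a)ω(b)` and `ω(d) ≤ ω(n)` whenever `d ∣ n`. -/
def SubMult (w : ℕ → ℝ) : Prop :=
  (∀ a b : ℕ, 0 < a → 0 < b → w (a * b) ≤ w a * w b) ∧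
    ∀ d n : ℕ, 0 < n → d ∣ n → w d ≤ w n

/-!
If `x`, `y` and `x - y` have denominators `k`, `ℓ`, `q`, then each of these divides the lcm of the
other two, so `k = rsu`, `ℓ = rtu`, `q = stu` with `u = gcd(k, ℓ, q)`. For fixed `k`, `ℓ`, `q`, the
class of `ℓx` modulo `1` equals that of `ℓ(x - y)` and, given `y`, determines `x ∈ (0, 1]` up to `u`
choices. Cauchy–Schwarz within each class then gives the bound `√(nu) ‖g_k‖ ‖f_q‖`.

The sum over `(r, s, t, u)` is handled by a Schur test that splits `u` as `√(ru/t) · √(tu/r)`. Given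
`k`, there are at most `τ₃(k)` triples `(r, s, u)`, and summing `√(ru/t)` over `t ≤ L/(ru)` costs
`2√L`. Given `q`, there are at most `τ₃(q)` triples `(s, t, u)`, and `√(tu/r) ≤ √L/r` leaves the
logarithmic sum of `ωτ₃` over `r ≤ L`.
-/

open Finset

/-! ### Finite sums -/

theorem sum_comp_le_sum_of_injOn {ι κ M : Type*} [AddCommMonoid M] [PartialOrder M]
    [IsOrderedAddMonoid M] {s : Finset ι} {t : Finset κ} {φ : ι → κ} {F : κ → M}
    (hφ : Set.InjOn φ s) (hst : Set.MapsTo φ s t) (hF : ∀ j ∈ t, 0 ≤ F j) :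
    ∑ i ∈ s, F (φ i) ≤ ∑ j ∈ t, F j := by
  classical
  rw [← sum_image (f := F) hφ]
  exact sum_le_sum_of_subset_of_nonneg (image_subset_iff.2 hst) fun j hj _ => hF j hj

theorem sum_mul_sum_fiber_le {ι κ α : Type*} [DecidableEq κ] (I : Finset ι) (A : Finset α)
    (row : ι → κ) (φ : α → κ) (P : ι → ℝ) {G : α → ℝ} {c : κ → ℝ} (hG : ∀ x, 0 ≤ G x)
    (hP : ∀ x ∈ A, ∑ i ∈ I with row i = φ x, P i ≤ c (φ x)) :
    ∑ i ∈ I, P i * ∑ x ∈ A with φ x = row i, G x ≤ ∑ x ∈ A, c (φ x) * G x := by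
  calc ∑ i ∈ I, P i * ∑ x ∈ A with φ x = row i, G x
      = ∑ x ∈ A, (∑ i ∈ I with row i = φ x, P i) * G x := by
        simp only [mul_sum, sum_mul]
        exact sum_comm' (by grind)
    _ ≤ ∑ x ∈ A, c (φ x) * G x :=
        sum_le_sum fun x hx => mul_le_mul_of_nonneg_right (hP x hx) (hG x)

theorem sum_mul_le_sqrt_card_mul {ι α β : Type*} (T : Finset ι) {A : Finset α} {Z : Finset β}
    {ξ : ι → α} {ζ : ι → β} (g : α → ℝ) (f : β → ℝ)
    (hinj : Set.InjOn (fun i => (ξ i, ζ i)) T) (hA : ∀ i ∈ T, ξ i ∈ A) (hZ : ∀ i ∈ T, ζ i ∈ Z) :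
    ∑ i ∈ T, g (ξ i) * f (ζ i) ≤ √(#T) * (√(∑ x ∈ A, g x ^ 2) * √(∑ z ∈ Z, f z ^ 2)) := by
  have hsq : ∑ i ∈ T, (g (ξ i) * f (ζ i)) ^ 2 ≤ (∑ x ∈ A, g x ^ 2) * ∑ z ∈ Z, f z ^ 2 := by
    simp only [mul_pow, sum_mul_sum, ← sum_product']
    exact sum_comp_le_sum_of_injOn (F := fun p : α × β => g p.1 ^ 2 * f p.2 ^ 2) hinj
      (fun i hi => mem_coe.2 <| mem_product.2 ⟨hA i hi, hZ i hi⟩) fun p _ => by positivity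
  rw [← Real.sqrt_mul (by positivity), ← Real.sqrt_mul (by positivity)]
  exact Real.le_sqrt_of_sq_le <| sq_sum_le_card_mul_sum_sq.trans <| by gcongr

theorem sum_mul_le_sqrt_mul_of_card_fiber_le {ι α β γ : Type*} [DecidableEq γ] (T : Finset ι)
    {A : Finset α} {Z : Finset β} {ξ : ι → α} {ζ : ι → β} (σ : α → γ) (ρ : β → γ) {D : ℕ}
    (g : α → ℝ) (f : β → ℝ) (hinj : Set.InjOn (fun i => (ξ i, ζ i)) T) (hA : ∀ i ∈ T, ξ i ∈ A)
    (hZ : ∀ i ∈ T, ζ i ∈ Z) (hσ : ∀ i ∈ T, σ (ξ i) = ρ (ζ i))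
    (hD : ∀ c, #{i ∈ T | σ (ξ i) = c} ≤ D) :
    ∑ i ∈ T, g (ξ i) * f (ζ i) ≤ √D * (√(∑ x ∈ A, g x ^ 2) * √(∑ z ∈ Z, f z ^ 2)) := by
  set C := T.image fun i => σ (ξ i)
  set a : γ → ℝ := fun c => ∑ x ∈ A with σ x = c, g x ^ 2
  set b : γ → ℝ := fun c => ∑ z ∈ Z with ρ z = c, f z ^ 2
  have ha (c : γ) : 0 ≤ a c := sum_nonneg fun _ _ => sq_nonneg _
  have hb (c : γ) : 0 ≤ b c := sum_nonneg fun _ _ => sq_nonneg _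
  have hclass (c : γ) : ∑ i ∈ T with σ (ξ i) = c, g (ξ i) * f (ζ i) ≤ √D * (√(a c) * √(b c)) := by
    refine (sum_mul_le_sqrt_card_mul _ g f (A := {x ∈ A | σ x = c}) (Z := {z ∈ Z | ρ z = c})
      (hinj.mono <| filter_subset _ _) ?_ ?_).trans ?_
    · simp +contextual [hA]
    · simp +contextual [hZ, ← hσ]
    · gcongr
      exact hD c
  calc ∑ i ∈ T, g (ξ i) * f (ζ i)
      = ∑ c ∈ C, ∑ i ∈ T with σ (ξ i) = c, g (ξ i) * f (ζ i) :=
        (sum_fiberwise_of_maps_to (fun i hi => mem_image_of_mem _ hi) _).symm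
    _ ≤ ∑ c ∈ C, √D * (√(a c) * √(b c)) := sum_le_sum fun c _ => hclass c
    _ ≤ √D * (√(∑ c ∈ C, a c) * √(∑ c ∈ C, b c)) := by
        rw [← mul_sum]
        gcongr
        exact Real.sum_sqrt_mul_sqrt_le C ha hb
    _ ≤ √D * (√(∑ x ∈ A, g x ^ 2) * √(∑ z ∈ Z, f z ^ 2)) := by
        gcongr
        · exact sum_fiberwise_le_sum_of_sum_fiber_nonneg fun c _ => ha c
        · exact sum_fiberwise_le_sum_of_sum_fiber_nonneg fun c _ => hb c

theorem sum_inv_sqrt_le (N : ℕ) : ∑ t ∈ Icc 1 N, (√(t : ℝ))⁻¹ ≤ 2 * √(N : ℝ) := by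
  induction N with
  | zero => simp
  | succ N ih =>
    have hpos : 0 < √((N : ℝ) + 1) := by positivity
    have hstep : (√((N : ℝ) + 1))⁻¹ ≤ 2 * √((N : ℝ) + 1) - 2 * √(N : ℝ) := by
      rw [inv_le_iff_one_le_mul₀ hpos]
      nlinarith [sq_nonneg (√((N : ℝ) + 1) - √(N : ℝ)), Real.sq_sqrt (Nat.cast_nonneg (α := ℝ) N),
        Real.sq_sqrt (show (0 : ℝ) ≤ N + 1 by positivity)]
    rw [sum_Icc_succ_top (by lia)]
    push_cast
    linarith

theorem sum_sqrt_div_le (L m : ℕ) : ∑ t ∈ Icc 1 (L / m), √((m : ℝ) / t) ≤ 2 * √(L : ℝ) := by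
  calc ∑ t ∈ Icc 1 (L / m), √((m : ℝ) / t)
      = √(m : ℝ) * ∑ t ∈ Icc 1 (L / m), (√(t : ℝ))⁻¹ := by
        rw [mul_sum]
        exact sum_congr rfl fun t _ => by rw [Real.sqrt_div (by positivity), div_eq_mul_inv]
    _ ≤ √(m : ℝ) * (2 * √((L / m : ℕ) : ℝ)) := by gcongr; exact sum_inv_sqrt_le _
    _ = 2 * √((m * (L / m) : ℕ) : ℝ) := by rw [Nat.cast_mul, Real.sqrt_mul (by positivity)]; ring
    _ ≤ 2 * √(L : ℝ) := by gcongr; exact Nat.mul_div_le L m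

theorem sum_div_le_log_mul_MlogAvg (w : ℕ → ℝ) {L : ℕ} (hL : 2 ≤ L) :
    ∑ n ∈ Icc 1 L, w n / (n : ℝ) ≤ Real.log L * MlogAvg w L := by
  set F : ℕ → ℝ := fun x => (∑ n ∈ Icc 1 x, w n / (n : ℝ)) / Real.log x
  have hbdd : BddAbove (Set.range fun x => ⨆ _ : x ∈ Icc 2 L, F x) := by
    refine (((Icc 2 L).finite_toSet.image F).insert 0).bddAbove.mono ?_
    rintro _ ⟨x, rfl⟩
    by_cases hx : x ∈ Icc 2 L
    · exact Or.inr ⟨x, hx, (ciSup_pos (f := fun _ => F x) hx).symm⟩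
    · exact Or.inl <| by simp only [hx, Real.iSup_of_isEmpty]
  have hle : F L ≤ MlogAvg w L := by
    refine (ciSup_pos (f := fun _ => F L) (mem_Icc.2 ⟨hL, le_rfl⟩)).symm.trans_le ?_
    exact le_ciSup hbdd L
  have hlog : 0 < Real.log L := Real.log_pos <| by exact_mod_cast hL
  rwa [div_le_iff₀' hlog] at hle

/-! ### The ternary divisor function and sub-multiplicativity -/

/-- The ordered factorizations `n = abc` counted by `tau3 n`, as triples `(a, b, c)`. -/
def tripleFactorizations (n : ℕ) : Finset (ℕ × ℕ × ℕ) :=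
  {p ∈ Icc 1 n ×ˢ Icc 1 n ×ˢ Icc 1 n | p.1 * p.2.1 * p.2.2 = n}

theorem card_tripleFactorizations (n : ℕ) : #(tripleFactorizations n) = tau3 n := rfl

theorem mem_tripleFactorizations {n : ℕ} {p : ℕ × ℕ × ℕ} :
    p ∈ tripleFactorizations n ↔ 0 < n ∧ p.1 * p.2.1 * p.2.2 = n := by
  obtain ⟨a, b, c⟩ := p
  simp only [tripleFactorizations, mem_filter, mem_product, mem_Icc]
  constructor
  · rintro ⟨⟨⟨ha, -⟩, ⟨hb, -⟩, hc, -⟩, rfl⟩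
    exact ⟨by positivity, rfl⟩
  · rintro ⟨hn, rfl⟩
    have hle {d : ℕ} (hd : d ∣ a * b * c) : 1 ≤ d ∧ d ≤ a * b * c :=
      ⟨Nat.pos_of_dvd_of_pos hd hn, Nat.le_of_dvd hn hd⟩
    exact ⟨⟨hle ⟨b * c, by ring⟩, hle ⟨a * c, by ring⟩, hle ⟨a * b, by ring⟩⟩, rfl⟩

theorem tau3_pos {n : ℕ} (hn : 0 < n) : 0 < tau3 n :=
  card_pos.2 ⟨(1, 1, n), mem_tripleFactorizations.2 ⟨hn, by simp⟩⟩

theorem tau3_mul_le {m n : ℕ} (hm : 0 < m) (hn : 0 < n) : tau3 (m * n) ≤ tau3 m * tau3 n := by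
  simp only [← card_tripleFactorizations, ← card_product]
  refine card_le_card_of_surjOn (fun p => (p.1.1 * p.2.1, p.1.2.1 * p.2.2.1, p.1.2.2 * p.2.2.2)) ?_
  rintro ⟨a, b, c⟩ habc
  obtain ⟨-, habc⟩ := mem_tripleFactorizations.1 habc
  obtain ⟨m₁₂, m₃, h₁₂, ⟨c', rfl⟩, rfl⟩ :=
    exists_dvd_and_dvd_of_dvd_mul (show m ∣ a * b * c from habc ▸ dvd_mul_right m n)
  obtain ⟨m₁, m₂, ⟨a', rfl⟩, ⟨b', rfl⟩, rfl⟩ := exists_dvd_and_dvd_of_dvd_mul h₁₂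
  have hn' : a' * b' * c' = n := Nat.eq_of_mul_eq_mul_left hm <| by rw [← habc]; ring
  exact ⟨((m₁, m₂, m₃), (a', b', c')), mem_coe.2 <| mem_product.2
    ⟨mem_tripleFactorizations.2 ⟨hm, rfl⟩, mem_tripleFactorizations.2 ⟨hn, hn'⟩⟩, rfl⟩

theorem tau3_le_of_dvd {d n : ℕ} (hn : 0 < n) (h : d ∣ n) : tau3 d ≤ tau3 n := by
  obtain ⟨e, rfl⟩ := h
  refine card_le_card_of_injOn (s := tripleFactorizations d) (t := tripleFactorizations (d * e))
    (fun p => (p.1 * e, p.2.1, p.2.2)) ?_ ?_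
  · intro p hp
    obtain ⟨-, rfl⟩ := mem_tripleFactorizations.1 hp
    exact mem_tripleFactorizations.2 ⟨hn, by ring⟩
  · rintro ⟨a, b, c⟩ - ⟨a', b', c'⟩ - h
    simpa [(Nat.pos_of_mul_pos_left hn).ne'] using h

theorem subMult_tau3 : SubMult fun n => (tau3 n : ℝ) := by
  refine ⟨fun a b ha hb => ?_, fun d n hn h => Nat.cast_le.2 (tau3_le_of_dvd hn h)⟩
  simp only [← Nat.cast_mul, Nat.cast_le, tau3_mul_le ha hb]

theorem SubMult.mul {v w : ℕ → ℝ} (hv : SubMult v) (hw : SubMult w) (hv₀ : ∀ n, 0 ≤ v n)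
    (hw₀ : ∀ n, 0 ≤ w n) : SubMult fun n => v n * w n := by
  refine ⟨fun a b ha hb => ?_, fun d n hn h =>
    mul_le_mul (hv.2 d n hn h) (hw.2 d n hn h) (hw₀ d) (hv₀ n)⟩
  calc v (a * b) * w (a * b) ≤ (v a * v b) * (w a * w b) :=
        mul_le_mul (hv.1 a b ha hb) (hw.1 a b ha hb) (hw₀ _) (mul_nonneg (hv₀ a) (hv₀ b))
    _ = v a * w a * (v b * w b) := by ring

theorem sum_le_tau3_mul {ι : Type*} {s : Finset ι} {F : ι → ℝ} {n : ℕ} {M : ℝ}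
    (φ : ι → ℕ × ℕ × ℕ) (hφ : ∀ i ∈ s, φ i ∈ tripleFactorizations n)
    (hF : ∀ c, ∑ i ∈ s with φ i = c, F i ≤ M) : ∑ i ∈ s, F i ≤ tau3 n * M := by
  rw [← sum_fiberwise_of_maps_to hφ, ← nsmul_eq_mul]
  exact sum_le_card_nsmul _ _ _ fun c _ => hF c

/-! ### Factoring the denominators of `x`, `y` and `x - y` -/

theorem mul_gcd_gcd_eq_of_dvd_lcm {k l q : ℕ} (h : k ∣ l.lcm q) :
    k * k.gcd (l.gcd q) = k.gcd l * k.gcd q := by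
  have hlq : k * k.gcd (l.gcd q) ∣ l * q := by
    rw [← Nat.gcd_mul_lcm l q, mul_comm (l.gcd q)]
    exact mul_dvd_mul h (Nat.gcd_dvd_right _ _)
  calc k * k.gcd (l.gcd q) = (k * k.gcd (l.gcd q)).gcd (l * q) := (Nat.gcd_eq_left hlq).symm
    _ = ((k * k.gcd q).gcd (k * l)).gcd (l * q) := by
        rw [Nat.gcd_mul_left, Nat.gcd_assoc k q, Nat.gcd_comm q]
    _ = (k * k.gcd q).gcd (l * k.gcd q) := by
        rw [Nat.gcd_assoc, mul_comm k l, Nat.gcd_mul_left]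
    _ = k.gcd l * k.gcd q := Nat.gcd_mul_right _ _ _

theorem gcd_div_mul_gcd_div_mul_gcd {k l q : ℕ} (hk : 0 < k) (h : k ∣ l.lcm q) :
    k.gcd l / k.gcd (l.gcd q) * (k.gcd q / k.gcd (l.gcd q)) * k.gcd (l.gcd q) = k := by
  have hu : 0 < k.gcd (l.gcd q) := Nat.gcd_pos_of_pos_left _ hk
  have hkl : k.gcd (l.gcd q) ∣ k.gcd l := Nat.gcd_dvd_gcd_of_dvd_right k (Nat.gcd_dvd_left l q)
  have hkq : k.gcd (l.gcd q) ∣ k.gcd q := Nat.gcd_dvd_gcd_of_dvd_right k (Nat.gcd_dvd_right l q)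
  refine Nat.eq_of_mul_eq_mul_right hu ?_
  rw [mul_gcd_gcd_eq_of_dvd_lcm h, mul_assoc (_ / _), Nat.div_mul_cancel hkq, mul_right_comm,
    Nat.div_mul_cancel hkl]

/-- Parameters of a triple `k = rsu`, `ℓ = rtu`, `q = stu` of positive integers, indexing the
possible denominators of `x`, `y`, `x - y`. Coprimality of `r`, `s`, `t` is not imposed, since the
sums over the parameters are only bounded from above. -/
@[ext]
structure DenFactors where
  (r s t u : ℕ)
  r_pos : 0 < r
  s_pos : 0 < s
  t_pos : 0 < t
  u_pos : 0 < u

namespace DenFactors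

instance : DecidableEq DenFactors := fun _ _ => decidable_of_iff' _ DenFactors.ext_iff

/-- The denominator `k = rsu` of `x`. -/
def k (i : DenFactors) : ℕ := i.r * i.s * i.u

/-- The denominator `ℓ = rtu` of `y`. -/
def l (i : DenFactors) : ℕ := i.r * i.t * i.u

/-- The denominator `q = stu` of `x - y`. -/
def q (i : DenFactors) : ℕ := i.s * i.t * i.u

theorem k_pos (i : DenFactors) : 0 < i.k := Nat.mul_pos (Nat.mul_pos i.r_pos i.s_pos) i.u_pos

theorem q_pos (i : DenFactors) : 0 < i.q := Nat.mul_pos (Nat.mul_pos i.s_pos i.t_pos) i.u_pos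

theorem sum_sqrt_le_of_k_eq {I : Finset DenFactors} {L : ℕ} (hI : ∀ i ∈ I, i.l ≤ L) (k : ℕ) :
    ∑ i ∈ I with i.k = k, √((i.r * i.u : ℝ) / i.t) ≤ tau3 k * (2 * √(L : ℝ)) := by
  refine sum_le_tau3_mul (fun i => (i.r, i.s, i.u)) (fun i hi => ?_) ?_
  · obtain ⟨-, rfl⟩ := mem_filter.1 hi
    exact mem_tripleFactorizations.2 ⟨i.k_pos, rfl⟩
  rintro ⟨r, s, u⟩
  refine le_trans ?_ (sum_sqrt_div_le L (r * u))
  set J := {i ∈ {i ∈ I | i.k = k} | (i.r, i.s, i.u) = (r, s, u)}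
  have hJ {i : DenFactors} (hi : i ∈ J) : i.l ≤ L ∧ i.r = r ∧ i.s = s ∧ i.u = u := by
    simp only [J, mem_filter, Prod.mk.injEq] at hi
    exact ⟨hI i hi.1.1, hi.2⟩
  calc ∑ i ∈ J, √((i.r * i.u : ℝ) / i.t) = ∑ i ∈ J, √(((r * u : ℕ) : ℝ) / i.t) :=
        sum_congr rfl fun i hi => by
          obtain ⟨-, rfl, -, rfl⟩ := hJ hi
          rw [Nat.cast_mul]
    _ ≤ ∑ t ∈ Icc 1 (L / (r * u)), √(((r * u : ℕ) : ℝ) / t) := by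
        refine sum_comp_le_sum_of_injOn (φ := DenFactors.t) (F := fun t : ℕ => √(_ / (t : ℝ)))
          ?_ ?_ fun _ _ => by positivity
        · intro i hi j hj ht
          obtain ⟨-, hr, hs, hu⟩ := hJ hi
          obtain ⟨-, rfl, rfl, rfl⟩ := hJ hj
          exact DenFactors.ext hr hs ht hu
        · intro i hi
          obtain ⟨hl, rfl, -, rfl⟩ := hJ hi
          refine mem_coe.2 <| mem_Icc.2 ⟨i.t_pos, ?_⟩
          rw [Nat.le_div_iff_mul_le (Nat.mul_pos i.r_pos i.u_pos)]
          exact le_of_eq_of_le (by rw [l]; ring) hl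

theorem sqrt_mul_sqrt_eq_u (i : DenFactors) :
    √((i.r * i.u : ℝ) / i.t) * √((i.t * i.u : ℝ) / i.r) = i.u := by
  have hr : (i.r : ℝ) ≠ 0 := mod_cast i.r_pos.ne'
  have ht : (i.t : ℝ) ≠ 0 := mod_cast i.t_pos.ne'
  rw [← Real.sqrt_mul (by positivity), Real.sqrt_eq_iff_mul_self_eq (by positivity) (by positivity)]
  field_simp

theorem apply_k_le {v : ℕ → ℝ} (hv : SubMult v) (hv₀ : ∀ n, 0 ≤ v n) (i : DenFactors) :
    v i.k ≤ v i.r * v i.q := by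
  have hdvd : i.s * i.u ∣ i.q := ⟨i.t, by rw [q]; ring⟩
  calc v i.k = v (i.r * (i.s * i.u)) := by rw [k, mul_assoc]
    _ ≤ v i.r * v (i.s * i.u) := hv.1 _ _ i.r_pos (Nat.mul_pos i.s_pos i.u_pos)
    _ ≤ v i.r * v i.q := mul_le_mul_of_nonneg_left (hv.2 _ _ i.q_pos hdvd) (hv₀ _)

theorem sqrt_le_sqrt_div {i : DenFactors} {L : ℕ} (hi : i.l ≤ L) :
    √((i.t * i.u : ℝ) / i.r) ≤ √(L : ℝ) / i.r := by
  have hr : (0 : ℝ) < i.r := mod_cast i.r_pos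
  have hl : (i.r * i.t * i.u : ℝ) ≤ L := mod_cast hi
  refine Real.sqrt_le_iff.2 ⟨by positivity, ?_⟩
  rw [div_pow, Real.sq_sqrt (Nat.cast_nonneg L), div_le_div_iff₀ hr (by positivity)]
  nlinarith

theorem sum_mul_sqrt_le_of_q_eq {I : Finset DenFactors} {L : ℕ} (hI : ∀ i ∈ I, i.l ≤ L)
    {v : ℕ → ℝ} (hv : SubMult v) (hv₀ : ∀ n, 0 ≤ v n) (q : ℕ) :
    ∑ i ∈ I with i.q = q, v i.k * √((i.t * i.u : ℝ) / i.r) ≤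
      tau3 q * (√(L : ℝ) * v q * ∑ r ∈ Icc 1 L, v r / r) := by
  refine sum_le_tau3_mul (fun i => (i.s, i.t, i.u)) (fun i hi => ?_) ?_
  · obtain ⟨-, rfl⟩ := mem_filter.1 hi
    exact mem_tripleFactorizations.2 ⟨i.q_pos, rfl⟩
  rintro ⟨s, t, u⟩
  set J := {i ∈ {i ∈ I | i.q = q} | (i.s, i.t, i.u) = (s, t, u)}
  have hJ {i : DenFactors} (hi : i ∈ J) : i.l ≤ L ∧ i.q = q ∧ i.s = s ∧ i.t = t ∧ i.u = u := by
    simp only [J, mem_filter, Prod.mk.injEq] at hi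
    exact ⟨hI i hi.1.1, hi.1.2, hi.2⟩
  rw [mul_sum]
  calc ∑ i ∈ J, v i.k * √((i.t * i.u : ℝ) / i.r)
      ≤ ∑ i ∈ J, √(L : ℝ) * v q * (v i.r / i.r) := by
        refine sum_le_sum fun i hi => ?_
        obtain ⟨hl, rfl, -⟩ := hJ hi
        have := hv₀ i.r
        have := hv₀ i.q
        calc v i.k * √((i.t * i.u : ℝ) / i.r) ≤ v i.r * v i.q * (√(L : ℝ) / i.r) := by
              gcongr
              exacts [apply_k_le hv hv₀ i, sqrt_le_sqrt_div hl]
          _ = √(L : ℝ) * v i.q * (v i.r / i.r) := by ring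
    _ ≤ ∑ r ∈ Icc 1 L, √(L : ℝ) * v q * (v r / r) := by
        refine sum_comp_le_sum_of_injOn (φ := DenFactors.r)
          (F := fun r : ℕ => √(L : ℝ) * v q * (v r / r)) ?_ ?_ fun r _ => ?_
        · intro i hi j hj hr
          obtain ⟨-, -, hs, ht, hu⟩ := hJ hi
          obtain ⟨-, -, rfl, rfl, rfl⟩ := hJ hj
          exact DenFactors.ext hr hs ht hu
        · intro i hi
          refine mem_coe.2 <| mem_Icc.2 ⟨i.r_pos, le_trans ?_ (hJ hi).1⟩
          rw [l, mul_assoc]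
          exact Nat.le_mul_of_pos_right _ (Nat.mul_pos i.t_pos i.u_pos)
        · have := hv₀ q
          have := hv₀ r
          positivity

end DenFactors

theorem den_dvd_lcm_sub_right (x y : ℚ) : y.den ∣ x.den.lcm (x - y).den := by
  simpa using Rat.sub_den_dvd_lcm x (x - y)

theorem den_dvd_lcm_sub_left (x y : ℚ) : x.den ∣ y.den.lcm (x - y).den := by
  simpa using Rat.add_den_dvd_lcm y (x - y)

/-- The factorization of the denominators of `x`, `y`, `x - y`, where `u` is their greatest common
divisor and `ru`, `su`, `tu` are their pairwise ones. -/
def denFactors (x y : ℚ) : DenFactors where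
  r := x.den.gcd y.den / x.den.gcd (y.den.gcd (x - y).den)
  s := x.den.gcd (x - y).den / x.den.gcd (y.den.gcd (x - y).den)
  t := y.den.gcd (x - y).den / x.den.gcd (y.den.gcd (x - y).den)
  u := x.den.gcd (y.den.gcd (x - y).den)
  r_pos := Nat.div_pos (Nat.le_of_dvd (Nat.gcd_pos_of_pos_left _ x.den_pos)
    (Nat.gcd_dvd_gcd_of_dvd_right _ (Nat.gcd_dvd_left _ _))) (Nat.gcd_pos_of_pos_left _ x.den_pos)
  s_pos := Nat.div_pos (Nat.le_of_dvd (Nat.gcd_pos_of_pos_left _ x.den_pos)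
    (Nat.gcd_dvd_gcd_of_dvd_right _ (Nat.gcd_dvd_right _ _))) (Nat.gcd_pos_of_pos_left _ x.den_pos)
  t_pos := Nat.div_pos (Nat.le_of_dvd (Nat.gcd_pos_of_pos_left _ y.den_pos)
    (Nat.gcd_dvd_right _ _)) (Nat.gcd_pos_of_pos_left _ x.den_pos)
  u_pos := Nat.gcd_pos_of_pos_left _ x.den_pos

theorem denFactors_k (x y : ℚ) : (denFactors x y).k = x.den :=
  gcd_div_mul_gcd_div_mul_gcd x.den_pos (den_dvd_lcm_sub_left x y)

theorem denFactors_l (x y : ℚ) : (denFactors x y).l = y.den := by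
  have h := gcd_div_mul_gcd_div_mul_gcd y.den_pos (den_dvd_lcm_sub_right x y)
  rwa [Nat.gcd_left_comm, Nat.gcd_comm y.den x.den] at h

theorem denFactors_q (x y : ℚ) : (denFactors x y).q = (x - y).den := by
  have h := gcd_div_mul_gcd_div_mul_gcd (x - y).den_pos (Rat.sub_den_dvd_lcm x y)
  rwa [Nat.gcd_comm _ (x.den.gcd _), Nat.gcd_assoc, Nat.gcd_comm _ x.den,
    Nat.gcd_comm _ y.den] at h

/-! ### Fixed denominators -/

theorem den_dvd_iff_exists_mul_eq_intCast {x : ℚ} {k : ℕ} :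
    x.den ∣ k ↔ ∃ m : ℤ, (k : ℚ) * x = m := by
  constructor
  · rintro ⟨c, rfl⟩
    refine ⟨c * x.num, ?_⟩
    push_cast
    rw [← Rat.den_mul_eq_num x]
    ring
  · rintro ⟨m, hm⟩
    rcases eq_or_ne k 0 with rfl | hk
    · exact dvd_zero _
    · have hx : x = Rat.divInt m k := by
        rw [Rat.divInt_eq_div, ← hm]
        push_cast
        field_simp
      exact hx ▸ Int.natCast_dvd_natCast.1 (Rat.den_dvd m k)

theorem sub_den_dvd_of_den_eq {x y : ℚ} {d : ℕ} (hx : x.den = d) (hy : y.den = d) :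
    (x - y).den ∣ d := by
  simpa only [hx, hy, Nat.lcm_self] using Rat.sub_den_dvd_lcm x y

theorem sub_den_dvd_of_fract_mul_eq {x y : ℚ} {l : ℕ}
    (h : Int.fract ((l : ℚ) * x) = Int.fract ((l : ℚ) * y)) : (x - y).den ∣ l := by
  rw [den_dvd_iff_exists_mul_eq_intCast]
  simpa only [mul_sub] using Int.fract_eq_fract.1 h

theorem fract_den_mul_sub (x y : ℚ) :
    Int.fract ((y.den : ℚ) * (x - y)) = Int.fract ((y.den : ℚ) * x) := by
  rw [mul_sub, Rat.den_mul_eq_num, Int.fract_sub_intCast]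

theorem card_le_of_sub_den_dvd {S : Finset ℚ} {u : ℕ} (hu : 0 < u)
    (hS : ∀ x ∈ S, x ∈ Set.Ioc 0 1) (hdvd : ∀ x ∈ S, ∀ y ∈ S, (x - y).den ∣ u) : #S ≤ u := by
  have hu' : (0 : ℚ) < u := mod_cast hu
  rw [show u = #(Icc (1 : ℤ) u) by simp]
  refine card_le_card_of_injOn (fun x => ⌈(u : ℚ) * x⌉) (fun x hx => ?_) fun x hx y hy hxy => ?_
  · obtain ⟨hx₀, hx₁⟩ := hS x hx
    refine mem_coe.2 <| mem_Icc.2 ⟨Int.one_le_ceil_iff.2 (by positivity), Int.ceil_le.2 ?_⟩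
    exact mul_le_of_le_one_right hu'.le hx₁
  · obtain ⟨m, hm⟩ := den_dvd_iff_exists_mul_eq_intCast.1 (hdvd x hx y hy)
    have hux : (u : ℚ) * x = u * y + m := by linarith
    have hm₀ : m = 0 := by
      simp only [hux, Int.ceil_add_intCast] at hxy
      linarith
    simpa [hm₀, hu'.ne'] using hux

section FixedDen

variable {T : Finset (ℚ × ℚ)} {A B Z : Finset ℚ} {k l q : ℕ}

theorem card_filter_fract_mul_le (hl : 0 < l)
    (hT : ∀ p ∈ T, p.1 ∈ A ∧ p.2 ∈ B ∧ p.1 - p.2 ∈ Z) (hA : ∀ x ∈ A, x ∈ Set.Ioc 0 1 ∧ x.den = k)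
    (hZ : ∀ z ∈ Z, z.den = q) (c : ℚ) :
    #{p ∈ T | Int.fract ((l : ℚ) * p.1) = c} ≤ #B * k.gcd (l.gcd q) := by
  set Tc := {p ∈ T | Int.fract ((l : ℚ) * p.1) = c}
  have hTc {p : ℚ × ℚ} (hp : p ∈ Tc) := mem_filter.1 hp
  rw [mul_comm]
  refine card_le_mul_card_image_of_maps_to (f := Prod.snd) (fun p hp => (hT p (hTc hp).1).2.1) _
    fun y _ => ?_
  set Ty := {p ∈ Tc | p.2 = y}
  have hinj : Set.InjOn (Prod.fst : ℚ × ℚ → ℚ) Ty := fun p hp p' hp' h =>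
    Prod.ext h ((mem_filter.1 hp).2.trans (mem_filter.1 hp').2.symm)
  rw [← card_image_of_injOn hinj]
  have hS {x : ℚ} (hx : x ∈ Ty.image Prod.fst) : (x, y) ∈ Tc := by
    obtain ⟨p, hp, rfl⟩ := mem_image.1 hx
    obtain ⟨hpc, rfl⟩ := mem_filter.1 hp
    exact hpc
  refine card_le_of_sub_den_dvd (Nat.gcd_pos_of_pos_right _ <| Nat.gcd_pos_of_pos_left _ hl)
    (fun x hx => (hA x (hT _ (hTc (hS hx)).1).1).1) fun x hx x' hx' => ?_
  obtain ⟨hxT, hxc⟩ := hTc (hS hx)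
  obtain ⟨hxT', hxc'⟩ := hTc (hS hx')
  have hk : (x - x').den ∣ k :=
    sub_den_dvd_of_den_eq (hA x (hT _ hxT).1).2 (hA x' (hT _ hxT').1).2
  have hl : (x - x').den ∣ l := sub_den_dvd_of_fract_mul_eq (hxc.trans hxc'.symm)
  have hq : (x - x').den ∣ q := by
    simpa only [sub_sub_sub_cancel_right] using
      sub_den_dvd_of_den_eq (hZ _ (hT _ hxT).2.2) (hZ _ (hT _ hxT').2.2)
  exact Nat.dvd_gcd hk (Nat.dvd_gcd hl hq)

theorem sum_mul_sub_le_of_den_eq (g f : ℚ → ℝ) (hl : 0 < l)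
    (hT : ∀ p ∈ T, p.1 ∈ A ∧ p.2 ∈ B ∧ p.1 - p.2 ∈ Z) (hA : ∀ x ∈ A, x ∈ Set.Ioc 0 1 ∧ x.den = k)
    (hB : ∀ y ∈ B, y.den = l) (hZ : ∀ z ∈ Z, z.den = q) :
    ∑ p ∈ T, g p.1 * f (p.1 - p.2) ≤
      √((#B * k.gcd (l.gcd q) : ℕ) : ℝ) * (√(∑ x ∈ A, g x ^ 2) * √(∑ z ∈ Z, f z ^ 2)) := by
  refine sum_mul_le_sqrt_mul_of_card_fiber_le T (ξ := Prod.fst) (ζ := fun p => p.1 - p.2)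
    (fun x => Int.fract ((l : ℚ) * x)) (fun z => Int.fract ((l : ℚ) * z)) g f ?_
    (fun p hp => (hT p hp).1) (fun p hp => (hT p hp).2.2) (fun p hp => ?_)
    (card_filter_fract_mul_le hl hT hA hZ)
  · rintro ⟨x, y⟩ - ⟨x', y'⟩ - h
    obtain ⟨rfl, h⟩ := Prod.mk.inj h
    simpa using h
  · rw [← hB p.2 (hT p hp).2.1, fract_den_mul_sub]

end FixedDen

/-! ### Summing over all denominators -/

section AllDen

variable {L n : ℕ} {A B Z : Finset ℚ} {w : ℕ → ℝ}

theorem sum_denFactors_fiber_le (g f : ℚ → ℝ) (hA : ∀ x ∈ A, x ∈ Set.Ioc 0 1)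
    (hBn : ∀ y ∈ B, #{y' ∈ B | y'.den = y.den} ≤ n) {x₀ y₀ : ℚ} (hy₀ : y₀ ∈ B) :
    ∑ p ∈ A ×ˢ B with p.1 - p.2 ∈ Z ∧ denFactors p.1 p.2 = denFactors x₀ y₀,
        g p.1 * f (p.1 - p.2) ≤
      √(n * (denFactors x₀ y₀).u : ℝ) * (√(∑ x ∈ A with x.den = (denFactors x₀ y₀).k, g x ^ 2) *
        √(∑ z ∈ Z with z.den = (denFactors x₀ y₀).q, f z ^ 2)) := by
  rw [denFactors_k, denFactors_q]
  refine (sum_mul_sub_le_of_den_eq g f (k := x₀.den) (q := (x₀ - y₀).den)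
    (A := {x ∈ A | x.den = x₀.den}) (B := {y ∈ B | y.den = y₀.den})
    (Z := {z ∈ Z | z.den = (x₀ - y₀).den}) y₀.den_pos (fun p hp => ?_) (fun x hx => ?_)
    (fun y hy => (mem_filter.1 hy).2) fun z hz => (mem_filter.1 hz).2).trans ?_
  · simp only [mem_filter, mem_product] at hp ⊢
    obtain ⟨⟨hpA, hpB⟩, hpZ, hp⟩ := hp
    refine ⟨⟨hpA, ?_⟩, ⟨hpB, ?_⟩, hpZ, ?_⟩
    · rw [← denFactors_k p.1 p.2, hp, denFactors_k]
    · rw [← denFactors_l p.1 p.2, hp, denFactors_l]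
    · rw [← denFactors_q p.1 p.2, hp, denFactors_q]
  · obtain ⟨hxA, hxk⟩ := mem_filter.1 hx
    exact ⟨hA x hxA, hxk⟩
  · push_cast
    gcongr
    · exact hBn y₀ hy₀
    · rfl

theorem sum_mul_sqrt_u_mul_le (I : Finset DenFactors) (hw : ∀ k, 0 ≤ w k) (n : ℕ) {a b : ℕ → ℝ}
    (ha : ∀ k, 0 ≤ a k) (hb : ∀ q, 0 ≤ b q) :
    ∑ i ∈ I, w i.k * (√(n * i.u : ℝ) * (√(a i.k) * √(b i.q))) ≤
      √(∑ i ∈ I, w i.k / tau3 i.k * √((i.r * i.u : ℝ) / i.t) * a i.k) *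
        √(∑ i ∈ I, n * (w i.k * tau3 i.k * √((i.t * i.u : ℝ) / i.r)) * b i.q) := by
  refine (sum_congr rfl fun i _ => ?_).trans_le <| Real.sum_sqrt_mul_sqrt_le I
    (fun i => by have := hw i.k; have := ha i.k; positivity)
    fun i => by have := hw i.k; have := hb i.q; positivity
  have hτ : (tau3 i.k : ℝ) ≠ 0 := mod_cast (tau3_pos i.k_pos).ne'
  have hprod : w i.k / tau3 i.k * √((i.r * i.u : ℝ) / i.t) * a i.k *
      (n * (w i.k * tau3 i.k * √((i.t * i.u : ℝ) / i.r)) * b i.q) =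
        w i.k ^ 2 * (n * i.u) * (a i.k * b i.q) := by
    linear_combination (w i.k ^ 2 * n * a i.k * b i.q) * i.sqrt_mul_sqrt_eq_u +
      (w i.k * √((i.r * i.u : ℝ) / i.t) * √((i.t * i.u : ℝ) / i.r) * n * a i.k * b i.q) *
        div_mul_cancel₀ (w i.k) hτ
  have hwk := hw i.k
  have hak := ha i.k
  symm
  rw [← Real.sqrt_mul (by positivity), hprod, Real.sqrt_mul (by positivity),
    Real.sqrt_mul (sq_nonneg _), Real.sqrt_sq hwk, Real.sqrt_mul hak, mul_assoc]

theorem sum_mul_sum_den_eq_k_le {I : Finset DenFactors} (hI : ∀ i ∈ I, i.l ≤ L) (hw : ∀ k, 0 ≤ w k)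
    (A : Finset ℚ) (g : ℚ → ℝ) :
    ∑ i ∈ I, w i.k / tau3 i.k * √((i.r * i.u : ℝ) / i.t) * ∑ x ∈ A with x.den = i.k, g x ^ 2 ≤
      2 * √(L : ℝ) * ∑ x ∈ A, w x.den * g x ^ 2 := by
  rw [mul_sum]
  simp only [← mul_assoc]
  refine sum_mul_sum_fiber_le I A DenFactors.k Rat.den _ (c := fun k => 2 * √(L : ℝ) * w k)
    (fun x => sq_nonneg (g x)) fun x _ => ?_
  have hwk := hw x.den
  have hτ : (0 : ℝ) < tau3 x.den := mod_cast tau3_pos x.den_pos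
  calc ∑ i ∈ I with i.k = x.den, w i.k / tau3 i.k * √((i.r * i.u : ℝ) / i.t)
      = w x.den / tau3 x.den * ∑ i ∈ I with i.k = x.den, √((i.r * i.u : ℝ) / i.t) := by
        rw [mul_sum]
        exact sum_congr rfl fun i hi => by rw [(mem_filter.1 hi).2]
    _ ≤ w x.den / tau3 x.den * (tau3 x.den * (2 * √(L : ℝ))) := by
        gcongr
        exact DenFactors.sum_sqrt_le_of_k_eq hI _
    _ = 2 * √(L : ℝ) * w x.den := by field_simp

theorem sum_mul_sum_den_eq_q_le {I : Finset DenFactors} (hI : ∀ i ∈ I, i.l ≤ L) (hw : ∀ k, 0 ≤ w k)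
    (hsub : SubMult w) (n : ℕ) (Z : Finset ℚ) (f : ℚ → ℝ) :
    ∑ i ∈ I, n * (w i.k * tau3 i.k * √((i.t * i.u : ℝ) / i.r)) *
        ∑ z ∈ Z with z.den = i.q, f z ^ 2 ≤
      n * √(L : ℝ) * (∑ r ∈ Icc 1 L, w r * tau3 r / r) *
        ∑ z ∈ Z, w z.den * (tau3 z.den : ℝ) ^ 2 * f z ^ 2 := by
  rw [mul_sum]
  conv_rhs => simp only [← mul_assoc]
  refine sum_mul_sum_fiber_le I Z DenFactors.q Rat.den _
    (c := fun q => n * √(L : ℝ) * (∑ r ∈ Icc 1 L, w r * tau3 r / r) * w q * (tau3 q : ℝ) ^ 2)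
    (fun z => sq_nonneg (f z)) fun z _ => ?_
  calc ∑ i ∈ I with i.q = z.den, n * (w i.k * tau3 i.k * √((i.t * i.u : ℝ) / i.r))
      ≤ n * (tau3 z.den * (√(L : ℝ) * (w z.den * tau3 z.den) *
          ∑ r ∈ Icc 1 L, w r * tau3 r / r)) := by
        rw [← mul_sum]
        gcongr
        exact DenFactors.sum_mul_sqrt_le_of_q_eq hI
          (hsub.mul subMult_tau3 hw fun _ => Nat.cast_nonneg _)
          (fun k => mul_nonneg (hw k) (Nat.cast_nonneg _)) _
    _ = n * √(L : ℝ) * (∑ r ∈ Icc 1 L, w r * tau3 r / r) * w z.den * (tau3 z.den : ℝ) ^ 2 := by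
        ring

theorem sum_weight_mul_sub_le (g f : ℚ → ℝ) (hA : ∀ x ∈ A, x ∈ Set.Ioc 0 1)
    (hB : ∀ y ∈ B, y.den ≤ L) (hBn : ∀ y ∈ B, #{y' ∈ B | y'.den = y.den} ≤ n)
    (hw : ∀ k, 0 ≤ w k) (hsub : SubMult w) :
    ∑ p ∈ A ×ˢ B with p.1 - p.2 ∈ Z, w p.1.den * (g p.1 * f (p.1 - p.2)) ≤
      √(2 * √(L : ℝ) * ∑ x ∈ A, w x.den * g x ^ 2) *
        √(n * √(L : ℝ) * (∑ r ∈ Icc 1 L, w r * tau3 r / r) *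
          ∑ z ∈ Z, w z.den * (tau3 z.den : ℝ) ^ 2 * f z ^ 2) := by
  set T := {p ∈ A ×ˢ B | p.1 - p.2 ∈ Z}
  set δ : ℚ × ℚ → DenFactors := fun p => denFactors p.1 p.2
  set I := T.image δ
  have hTB {p : ℚ × ℚ} (hp : p ∈ T) : p.2 ∈ B := (mem_product.1 (mem_filter.1 hp).1).2
  have hI (i : DenFactors) (hi : i ∈ I) : i.l ≤ L := by
    obtain ⟨p, hp, rfl⟩ := mem_image.1 hi
    exact (denFactors_l _ _).trans_le (hB _ (hTB hp))
  calc ∑ p ∈ T, w p.1.den * (g p.1 * f (p.1 - p.2))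
      = ∑ i ∈ I, ∑ p ∈ T with δ p = i, w p.1.den * (g p.1 * f (p.1 - p.2)) :=
        (sum_fiberwise_of_maps_to (fun p hp => mem_image_of_mem δ hp) _).symm
    _ = ∑ i ∈ I, w i.k * ∑ p ∈ T with δ p = i, g p.1 * f (p.1 - p.2) := by
        refine sum_congr rfl fun i _ => ?_
        rw [mul_sum]
        exact sum_congr rfl fun p hp => by rw [← (mem_filter.1 hp).2, denFactors_k]
    _ ≤ ∑ i ∈ I, w i.k * (√(n * i.u : ℝ) * (√(∑ x ∈ A with x.den = i.k, g x ^ 2) *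
          √(∑ z ∈ Z with z.den = i.q, f z ^ 2))) := by
        refine sum_le_sum fun i hi => mul_le_mul_of_nonneg_left ?_ (hw _)
        obtain ⟨p, hp, rfl⟩ := mem_image.1 hi
        rw [filter_filter]
        exact sum_denFactors_fiber_le g f hA hBn (hTB hp)
    _ ≤ √(∑ i ∈ I, w i.k / tau3 i.k * √((i.r * i.u : ℝ) / i.t) *
            ∑ x ∈ A with x.den = i.k, g x ^ 2) *
          √(∑ i ∈ I, n * (w i.k * tau3 i.k * √((i.t * i.u : ℝ) / i.r)) *
            ∑ z ∈ Z with z.den = i.q, f z ^ 2) :=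
        sum_mul_sqrt_u_mul_le I hw n (a := fun k => ∑ x ∈ A with x.den = k, g x ^ 2)
          (b := fun q => ∑ z ∈ Z with z.den = q, f z ^ 2)
          (fun k => sum_nonneg fun _ _ => sq_nonneg _) fun q => sum_nonneg fun _ _ => sq_nonneg _
    _ ≤ _ := by
        gcongr
        · exact sum_mul_sum_den_eq_k_le hI hw A g
        · exact sum_mul_sum_den_eq_q_le hI hw hsub n Z f

end AllDen

/-! ### The main inequality -/

theorem mem_Qeq_iff {q : ℕ} {x : ℚ} : x ∈ Qeq q ↔ x.den = q ∧ x ∈ Set.Ioc 0 1 := by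
  simp only [Qeq, mem_image, mem_filter, mem_Icc, Set.mem_Ioc]
  constructor
  · rintro ⟨a, ⟨⟨ha, haq⟩, hcop⟩, rfl⟩
    have hq : 0 < q := ha.trans haq
    have hden : (((a : ℤ) / (q : ℤ) : ℚ).den : ℤ) = q :=
      Rat.den_div_eq_of_coprime (mod_cast hq) (by simpa using hcop)
    refine ⟨by simpa only [Int.cast_natCast, Nat.cast_inj] using hden, by positivity, ?_⟩
    exact div_le_one_of_le₀ (Nat.cast_le.2 haq) q.cast_nonneg
  · rintro ⟨rfl, hx₀, hx₁⟩
    have hnum : 0 < x.num := Rat.num_pos.2 hx₀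
    have habs : (x.num.natAbs : ℤ) = x.num := Int.natAbs_of_nonneg hnum.le
    have hle : x.num ≤ x.den := Rat.num_le_denom_iff.2 hx₁
    refine ⟨x.num.natAbs, ⟨⟨by lia, by lia⟩, x.reduced⟩, ?_⟩
    rw [← Int.cast_natCast, habs, Rat.num_div_den]

theorem mem_Qle_iff {Q : ℕ} {x : ℚ} : x ∈ Qle Q ↔ x.den ≤ Q ∧ x ∈ Set.Ioc 0 1 := by
  simp only [Qle, mem_biUnion, mem_Icc, mem_Qeq_iff]
  constructor
  · rintro ⟨q, ⟨-, hq⟩, rfl, hx⟩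
    exact ⟨hq, hx⟩
  · rintro ⟨hq, hx⟩
    exact ⟨x.den, ⟨x.den_pos, hq⟩, rfl, hx⟩

theorem card_filter_den_le {L n : ℕ} {B : Finset ℚ} (hB : B ⊆ Qle L)
    (hBn : ∀ ℓ : ℕ, 1 ≤ ℓ → ℓ ≤ L → #(B ∩ Qeq ℓ) ≤ n) {y : ℚ} (hy : y ∈ B) :
    #{y' ∈ B | y'.den = y.den} ≤ n := by
  refine (card_le_card fun y' hy' => ?_).trans (hBn y.den y.den_pos (mem_Qle_iff.1 (hB hy)).1)
  obtain ⟨hy'B, hden⟩ := mem_filter.1 hy'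
  exact mem_inter.2 ⟨hy'B, mem_Qeq_iff.2 ⟨hden, (mem_Qle_iff.1 (hB hy'B)).2⟩⟩

theorem statement_4_general {L n : ℕ} (hL : 2 ≤ L) {A B Z : Finset ℚ} {f g : ℚ → ℝ}
    (hA : ∀ x ∈ A, x ∈ Set.Ioc 0 1) (hf : f.support ⊆ Z) (hB : ∀ y ∈ B, y.den ≤ L)
    (hBn : ∀ y ∈ B, #{y' ∈ B | y'.den = y.den} ≤ n) {w : ℕ → ℝ} (hw : ∀ k, 0 ≤ w k)
    (hsub : SubMult w) :
    ∑ x ∈ A, ∑ y ∈ B, w x.den * g x * f (x - y) ≤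
      √2 * √(L * n * Real.log L * MlogAvg (fun k => w k * tau3 k) L) *
        √(∑ z ∈ Z, w z.den * (tau3 z.den : ℝ) ^ 2 * f z ^ 2) *
        √(∑ x ∈ A, w x.den * g x ^ 2) := by
  set S := ∑ r ∈ Icc 1 L, w r * tau3 r / r
  set U := ∑ x ∈ A, w x.den * g x ^ 2
  set V := ∑ z ∈ Z, w z.den * (tau3 z.den : ℝ) ^ 2 * f z ^ 2
  have hS : 0 ≤ S := sum_nonneg fun r _ => by have := hw r; positivity
  have hU : 0 ≤ U := sum_nonneg fun x _ => by have := hw x.den; positivity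
  have hV : 0 ≤ V := sum_nonneg fun z _ => by have := hw z.den; positivity
  calc ∑ x ∈ A, ∑ y ∈ B, w x.den * g x * f (x - y)
      = ∑ p ∈ A ×ˢ B with p.1 - p.2 ∈ Z, w p.1.den * (g p.1 * f (p.1 - p.2)) := by
        simp only [mul_assoc, ← sum_product']
        refine (sum_filter_of_ne fun p _ hp => hf ?_).symm
        exact right_ne_zero_of_mul (right_ne_zero_of_mul hp)
    _ ≤ √(2 * √(L : ℝ) * U) * √(n * √(L : ℝ) * S * V) :=
        sum_weight_mul_sub_le g f hA hB hBn hw hsub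
    _ = √2 * √(L * n * S) * √V * √U := by
        rw [← Real.sqrt_mul (by positivity), ← Real.sqrt_mul (by positivity),
          ← Real.sqrt_mul (by positivity), ← Real.sqrt_mul (by positivity)]
        congr 1
        linear_combination (2 * n * S * U * V) * Real.mul_self_sqrt (Nat.cast_nonneg (α := ℝ) L)
    _ ≤ √2 * √(L * n * Real.log L * MlogAvg (fun k => w k * tau3 k) L) * √V * √U := by
        rw [mul_assoc (L * n : ℝ) (Real.log L)]
        gcongr
        exact sum_div_le_log_mul_MlogAvg _ hL

theorem statement_4 :
    ∃ C > (0 : ℝ), ∀ K L n X : ℕ, 1 ≤ K → 2 ≤ L → 1 ≤ n → 2 ≤ X →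
      ∀ f g : ℚ →₀ ℕ, f 0 = 0 → (∀ x, f x ≤ X) → (∀ x, g x ≤ X) → g.support ⊆ Qle K →
      ∀ B : Finset ℚ, B ⊆ Qle L →
        (∀ ℓ : ℕ, 1 ≤ ℓ → ℓ ≤ L → (B ∩ Qeq ℓ).card ≤ n) →
      ∀ w : ℕ → ℝ, (∀ k, 0 ≤ w k) → SubMult w →
        (∑ x ∈ g.support, ∑ y ∈ B, w x.den * (g x : ℝ) * (f (x - y) : ℝ)) ≤
          C * Real.log X *
            Real.sqrt ((L : ℝ) * n * Real.log L * MlogAvg (fun k => w k * tau3 k) L) *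
            Real.sqrt (∑ z ∈ f.support, w z.den * (tau3 z.den : ℝ) ^ 2 * (f z : ℝ) ^ 2) *
            Real.sqrt (∑ x ∈ g.support, w x.den * (g x : ℝ) ^ 2) := by
  refine ⟨√2 / Real.log 2, by positivity, ?_⟩
  intro K L n X _ hL _ hX f g _ _ _ hg B hB hBn w hw hsub
  have hlog : √2 ≤ √2 / Real.log 2 * Real.log X := by
    rw [div_mul_eq_mul_div, mul_div_assoc]
    refine le_mul_of_one_le_right (by positivity) ?_
    rw [one_le_div (by positivity)]
    gcongr
    exact_mod_cast hX
  have hgen := statement_4_general (f := fun z => (f z : ℝ)) (g := fun x => (g x : ℝ))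
    (A := g.support) (Z := f.support) hL (fun x hx => (mem_Qle_iff.1 (hg hx)).2)
    (fun z hz => by simpa using hz) (fun y hy => (mem_Qle_iff.1 (hB hy)).1)
    (fun _ => card_filter_den_le hB hBn) hw hsub
  exact hgen.trans <| by gcongr
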